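/- arXiv:2605.17847 — 4 statements merged into one kernel-verified Lean document; each statement's English description precedes it below -/
import Mathlib

section
/- The diameter of the zero-divisor graph Γ(R) equals 2; that is, any two distinct vertices are at distance at most 2, and there exist two vertices at distance exactly 2. -/
/- `Rng p` models the ring `R = 𝔽_p[u,v]/⟨u², v², uv - vu⟩`:
every element is uniquely `a + b·u + c·v + d·uv` with `a b c d : ZMod p`. -/
set_option synthInstance.maxHeartbeats 1000000
set_option maxHeartbeats 1000000

abbrev Rng (p : ℕ) : Type := DualNumber (DualNumber (ZMod p))

/-- The element `u` of `R` (satisfies `u² = 0`). -/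
def uu (p : ℕ) : Rng p := TrivSqZeroExt.inl DualNumber.eps

/-- The element `v` of `R` (satisfies `v² = 0`). -/
def vv (p : ℕ) : Rng p := DualNumber.eps

/-- The vertex set `Z*(R)`: nonzero zero-divisors of `R`. -/
abbrev Vtx (p : ℕ) : Type := {x : Rng p // x ≠ 0 ∧ ∃ y : Rng p, y ≠ 0 ∧ x * y = 0}

/-- The zero-divisor graph `Γ(R)`. -/
def ZDG (p : ℕ) : SimpleGraph (Vtx p) where
  Adj a b := a ≠ b ∧ (a : Rng p) * (b : Rng p) = 0
  symm := ⟨fun a b h => ⟨h.1.symm, (mul_comm (b : Rng p) (a : Rng p)).trans h.2⟩⟩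
  loopless := ⟨fun a h => h.1 rfl⟩

instance (p : ℕ) : DecidableEq (Rng p) :=
  inferInstanceAs (DecidableEq ((ZMod p × ZMod p) × ZMod p × ZMod p))

instance (p : ℕ) [NeZero p] : Fintype (Rng p) :=
  inferInstanceAs (Fintype ((ZMod p × ZMod p) × ZMod p × ZMod p))

instance (p : ℕ) : DecidableRel (ZDG p).Adj :=
  fun a b => inferInstanceAs (Decidable (a ≠ b ∧ (a : Rng p) * (b : Rng p) = 0))

/-!
If a nonzero `c` annihilates every zero divisor, then `c` is adjacent to every other vertex of the
zero-divisor graph, so the diameter is at most `2`. Such a `c` propagates from `R` to `c * ε` in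
`R[ε]`, because an element of `R[ε]` with regular constant term is regular; starting from `1` in a
field and adjoining `u` and then `v` gives `uv`. Finally `u` and `v` are vertices, as `u² = v² = 0`,
and they are neither equal nor adjacent, as `uv ≠ 0`.
-/

open scoped nonZeroDivisors DualNumber

/-- The nonzero zero divisors of a commutative monoid with zero, spelled as in `Vtx` so that `Vtx p`
is definitionally `ZeroDivisorVertex (Rng p)`. -/
abbrev ZeroDivisorVertex (R : Type*) [CommMonoidWithZero R] : Type _ :=
  {x : R // x ≠ 0 ∧ ∃ y : R, y ≠ 0 ∧ x * y = 0}

/-- The zero-divisor graph of an arbitrary commutative monoid with zero. The adjacency relation is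
spelled as in `ZDG`, so that `ZDG p` is definitionally `zeroDivisorGraph (Rng p)`. -/
def zeroDivisorGraph (R : Type*) [CommMonoidWithZero R] : SimpleGraph (ZeroDivisorVertex R) where
  Adj x y := x ≠ y ∧ (x : R) * y = 0
  symm := ⟨fun x y h => ⟨h.1.symm, (mul_comm (y : R) x).trans h.2⟩⟩
  loopless := ⟨fun _ h => h.1 rfl⟩

/-- The element `c` annihilates every zero divisor. A nonzero such `c` is a universal
vertex of the zero-divisor graph as soon as that graph has a vertex. -/
def AnnihilatesZeroDivisors {R : Type*} [CommMonoidWithZero R] (c : R) : Prop :=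
  ∀ x ∉ R⁰, x * c = 0

section CommMonoidWithZero

variable {R : Type*} [CommMonoidWithZero R] {c : R}

theorem AnnihilatesZeroDivisors.mul_eq_zero (hc : AnnihilatesZeroDivisors c) {x y : R}
    (hy : y ≠ 0) (hxy : x * y = 0) : x * c = 0 :=
  hc x (notMem_nonZeroDivisors_iff_left.2 ⟨y, hxy, hy⟩)

theorem AnnihilatesZeroDivisors.ediam_le_two (hc : AnnihilatesZeroDivisors c) (hc0 : c ≠ 0) :
    (zeroDivisorGraph R).ediam ≤ 2 := by
  refine SimpleGraph.ediam_le_of_edist_le fun x y => ?_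
  have mul_c : ∀ z : ZeroDivisorVertex R, (z : R) * c = 0 := by
    rintro ⟨z, -, t, ht, hzt⟩
    exact hc.mul_eq_zero ht hzt
  let w : ZeroDivisorVertex R := ⟨c, hc0, x, x.2.1, (mul_comm c (x : R)).trans (mul_c x)⟩
  have universal : (zeroDivisorGraph R).IsUniversal w := fun z hwz =>
    ⟨hwz, (mul_comm c (z : R)).trans (mul_c z)⟩
  calc (zeroDivisorGraph R).edist x y
      ≤ (zeroDivisorGraph R).ediam := SimpleGraph.edist_le_ediam
    _ ≤ 2 * (zeroDivisorGraph R).eccent w := SimpleGraph.ediam_le_two_mul_eccent w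
    _ ≤ 2 * 1 := by gcongr; exact (SimpleGraph.eccent_le_one_iff w).2 universal
    _ = 2 := mul_one 2

theorem AnnihilatesZeroDivisors.dist_le_two (hc : AnnihilatesZeroDivisors c) (hc0 : c ≠ 0)
    (x y : ZeroDivisorVertex R) : (zeroDivisorGraph R).dist x y ≤ 2 :=
  ENat.toNat_le_of_le_natCast (SimpleGraph.edist_le_ediam.trans (hc.ediam_le_two hc0))

theorem AnnihilatesZeroDivisors.exists_dist_eq_two (hc : AnnihilatesZeroDivisors c) (hc0 : c ≠ 0)
    {a b : R} (haa : a * a = 0) (hbb : b * b = 0) (hab : a * b ≠ 0) :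
    ∃ x y, (zeroDivisorGraph R).dist x y = 2 := by
  have ha : a ≠ 0 := left_ne_zero_of_mul hab
  have hb : b ≠ 0 := right_ne_zero_of_mul hab
  let x : ZeroDivisorVertex R := ⟨a, ha, a, ha, haa⟩
  let y : ZeroDivisorVertex R := ⟨b, hb, b, hb, hbb⟩
  have hne : x ≠ y := by
    intro h
    have hab_eq : a = b := congrArg Subtype.val h
    exact hab (hab_eq ▸ haa)
  have hadj : ¬ (zeroDivisorGraph R).Adj x y := fun h => hab h.2
  have hreach : (zeroDivisorGraph R).Reachable x y :=
    SimpleGraph.preconnected_of_ediam_ne_top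
      ((hc.ediam_le_two hc0).trans_lt (ENat.natCast_lt_top 2)).ne x y
  exact ⟨x, y, (hc.dist_le_two hc0 x y).antisymm (hreach.one_lt_dist_of_ne_of_not_adj hne hadj)⟩

end CommMonoidWithZero

theorem annihilatesZeroDivisors_one {R : Type*} [CommMonoidWithZero R] [NoZeroDivisors R] :
    AnnihilatesZeroDivisors (1 : R) := by
  intro x hx
  rw [mul_one]
  exact not_imp_comm.1 mem_nonZeroDivisors_of_ne_zero hx

section DualNumber

variable {R : Type*} [CommSemiring R]

theorem dualNumber_mem_nonZeroDivisors {x : R[ε]} (hx : x.fst ∈ R⁰) : x ∈ R[ε]⁰ := by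
  refine mem_nonZeroDivisors_iff_left.2 fun y hxy => ?_
  have hfst : y.fst = 0 :=
    (mul_left_mem_nonZeroDivisors_eq_zero_iff hx).1 (congrArg TrivSqZeroExt.fst hxy)
  have hsnd : x.fst * y.snd = 0 := by
    simpa [hfst] using congrArg TrivSqZeroExt.snd hxy
  exact TrivSqZeroExt.ext hfst ((mul_left_mem_nonZeroDivisors_eq_zero_iff hx).1 hsnd)

theorem AnnihilatesZeroDivisors.inr {c : R} (hc : AnnihilatesZeroDivisors c) :
    AnnihilatesZeroDivisors (TrivSqZeroExt.inr c : R[ε]) := by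
  intro x hx
  have hfst : x.fst * c = 0 := hc x.fst (mt dualNumber_mem_nonZeroDivisors hx)
  ext
  · simp
  · simpa [mul_comm] using hfst

theorem inl_eps_mul_eps_ne_zero [Nontrivial R] :
    (TrivSqZeroExt.inl ε * ε : R[ε][ε]) ≠ 0 := by
  intro h
  simpa using congrArg (fun x : R[ε][ε] => x.snd.snd) h

theorem stmt4_general {c : R} (hc : AnnihilatesZeroDivisors c) (hc0 : c ≠ 0) :
    (∀ x y, (zeroDivisorGraph R[ε][ε]).dist x y ≤ 2) ∧
      (∃ x y, (zeroDivisorGraph R[ε][ε]).dist x y = 2) := by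
  have : Nontrivial R := nontrivial_of_ne c 0 hc0
  have hann : AnnihilatesZeroDivisors (TrivSqZeroExt.inr (TrivSqZeroExt.inr c) : R[ε][ε]) :=
    hc.inr.inr
  have hann0 : (TrivSqZeroExt.inr (TrivSqZeroExt.inr c) : R[ε][ε]) ≠ 0 :=
    TrivSqZeroExt.inr_injective.ne (TrivSqZeroExt.inr_injective.ne hc0)
  have inl_eps_sq : (TrivSqZeroExt.inl ε * TrivSqZeroExt.inl ε : R[ε][ε]) = 0 := by
    rw [TrivSqZeroExt.inl_mul_inl, DualNumber.eps_mul_eps, TrivSqZeroExt.inl_zero]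
  exact ⟨hann.dist_le_two hann0,
    hann.exists_dist_eq_two hann0 inl_eps_sq DualNumber.eps_mul_eps inl_eps_mul_eps_ne_zero⟩

end DualNumber

theorem stmt4 (p : ℕ) [Fact p.Prime] (hodd : Odd p) :
    (∀ x y : Vtx p, x ≠ y → (ZDG p).dist x y ≤ 2) ∧
      (∃ x y : Vtx p, (ZDG p).dist x y = 2) :=
  (stmt4_general (R := ZMod p) annihilatesZeroDivisors_one one_ne_zero).imp_left
    fun h x y _ => h x y
end

section
/- The set A_u ∪ A_uv = {x·u : x ∈ 𝔽_p*} ∪ {x·uv : x ∈ 𝔽_p*} induces a complete subgraph of Γ(R) on 2p − 2 vertices; consequently the clique number of Γ(R) is at least 2p − 2. -/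
/- `Rng p` models the ring `R = 𝔽_p[u,v]/⟨u², v², uv - vu⟩`:
every element is uniquely `a + b·u + c·v + d·uv` with `a b c d : ZMod p`. -/
set_option synthInstance.maxHeartbeats 1000000
set_option maxHeartbeats 1000000

/-! Every nonzero multiple of an element of square zero is a zero-divisor, and any two of them
annihilate each other. Both `x • u` and `x • uv` are multiples of `u`, and `u² = 0`. As `u` and `uv`
are linearly independent, distinct nonzero scalars give distinct elements in each of the two
families, and the families do not meet. -/

theorem mul_eq_zero_of_dvd_of_dvd {R : Type*} [CommSemiring R] {e a b : R} (he : e * e = 0)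
    (ha : e ∣ a) (hb : e ∣ b) : a * b = 0 :=
  zero_dvd_iff.mp (he ▸ mul_dvd_mul ha hb)

theorem ncard_le_cliqueNum_of_isClique {V : Type*} [Finite V] {G : SimpleGraph V} {s : Set V}
    (hs : G.IsClique s) : s.ncard ≤ G.cliqueNum := by
  rw [Set.ncard_eq_toFinset_card s]
  exact SimpleGraph.IsClique.card_le_cliqueNum (tc := by rwa [Set.Finite.coe_toFinset])

/-- The set of multiples `x • e` of `e` by nonzero scalars `x : S`; over `𝔽_p` these are the sets
written `A_u` and `A_uv` for `e = u` and `e = uv`. -/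
def nonzeroMultiples (S : Type*) {M : Type*} [Zero S] [SMul S M] (e : M) : Set M :=
  (fun x : S ↦ x • e) '' {0}ᶜ

namespace nonzeroMultiples

theorem mem_union_iff {S M : Type*} [Zero S] [SMul S M] {e f m : M} :
    m ∈ nonzeroMultiples S e ∪ nonzeroMultiples S f ↔
      ∃ x : S, x ≠ 0 ∧ (m = x • e ∨ m = x • f) := by
  simp only [nonzeroMultiples, Set.mem_union, Set.mem_image, Set.mem_compl_singleton_iff,
    and_or_left, exists_or, eq_comm (a := m)]

theorem dvd_of_mem {S R : Type*} [Zero S] [SMul S R] [Semigroup R] [SMulCommClass S R R]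
    {d e a : R} (hd : d ∣ e) (ha : a ∈ nonzeroMultiples S e) : d ∣ a := by
  obtain ⟨x, -, rfl⟩ := ha
  exact dvd_smul_of_dvd x hd

theorem ncard_eq {S M : Type*} [Zero S] [SMul S M] [Finite S] {e : M}
    (he : Function.Injective fun x : S ↦ x • e) :
    (nonzeroMultiples S e).ncard = Nat.card S - 1 := by
  rw [nonzeroMultiples, Set.ncard_image_of_injective _ he, Set.ncard_compl, Set.ncard_singleton]

section LinearIndependent

variable {S M : Type*} [Semiring S] [AddCommMonoid M] [Module S M] {e f : M}

theorem zero_notMem_union (h : LinearIndependent S ![e, f]) :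
    (0 : M) ∉ nonzeroMultiples S e ∪ nonzeroMultiples S f := by
  rw [mem_union_iff]
  rintro ⟨x, hx, he | hf⟩
  · exact hx (h.eq_zero_of_pair' (t := 0) (by rw [← he, zero_smul])).1
  · exact hx (h.eq_zero_of_pair' (s := 0) (by rw [← hf, zero_smul])).2

theorem disjoint (h : LinearIndependent S ![e, f]) :
    Disjoint (nonzeroMultiples S e) (nonzeroMultiples S f) := by
  rw [Set.disjoint_left]
  rintro _ ⟨x, hx, rfl⟩ ⟨y, -, hyx⟩
  exact hx (h.eq_zero_of_pair' hyx.symm).1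

theorem ncard_union [Finite S] (h : LinearIndependent S ![e, f]) :
    (nonzeroMultiples S e ∪ nonzeroMultiples S f).ncard = 2 * Nat.card S - 2 := by
  have ncard_e : (nonzeroMultiples S e).ncard = Nat.card S - 1 := ncard_eq (h.smul_left_injective 0)
  have ncard_f : (nonzeroMultiples S f).ncard = Nat.card S - 1 := ncard_eq (h.smul_left_injective 1)
  rw [Set.ncard_union_eq (disjoint h) ((Set.toFinite _).image _) ((Set.toFinite _).image _),
    ncard_e, ncard_f]
  lia

end LinearIndependent

end nonzeroMultiples

section ZeroDivisorGraph

variable (p : ℕ)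

theorem uu_mul_uu : uu p * uu p = 0 := by
  rw [uu, ← TrivSqZeroExt.inl_mul, DualNumber.eps_mul_eps, TrivSqZeroExt.inl_zero]

theorem mul_eq_zero_of_uu_dvd {a b : Rng p} (ha : uu p ∣ a) (hb : uu p ∣ b) : a * b = 0 :=
  mul_eq_zero_of_dvd_of_dvd (R := Rng p) (uu_mul_uu p) ha hb

theorem linearIndependent_uu_uu_mul_vv : LinearIndependent (ZMod p) ![uu p, uu p * vv p] := by
  rw [LinearIndependent.pair_iff]
  intro x y hxy
  have coeff_u : (x • uu p + y • (uu p * vv p)).fst.snd = x := by simp [uu, vv]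
  have coeff_uv : (x • uu p + y • (uu p * vv p)).snd.snd = y := by simp [uu, vv]
  exact ⟨by simpa [hxy] using coeff_u.symm, by simpa [hxy] using coeff_uv.symm⟩

theorem isClique_setOf_uu_dvd : (ZDG p).IsClique {a : Vtx p | uu p ∣ (a : Rng p)} :=
  fun _ ha _ hb hab ↦ ⟨hab, mul_eq_zero_of_uu_dvd p ha hb⟩

theorem uu_dvd_of_mem_nonzeroMultiples_union {a : Rng p}
    (ha : a ∈ nonzeroMultiples (ZMod p) (uu p) ∪ nonzeroMultiples (ZMod p) (uu p * vv p)) :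
    uu p ∣ a :=
  ha.elim (nonzeroMultiples.dvd_of_mem dvd_rfl) (nonzeroMultiples.dvd_of_mem (dvd_mul_right _ _))

theorem nonzeroMultiples_union_subset_range_val :
    nonzeroMultiples (ZMod p) (uu p) ∪ nonzeroMultiples (ZMod p) (uu p * vv p) ⊆
      Set.range (Subtype.val : Vtx p → Rng p) := by
  intro a ha
  have a_ne_zero : a ≠ 0 := ne_of_mem_of_not_mem ha
    (nonzeroMultiples.zero_notMem_union (linearIndependent_uu_uu_mul_vv p))
  have uu_dvd : uu p ∣ a := uu_dvd_of_mem_nonzeroMultiples_union p ha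
  exact ⟨⟨a, a_ne_zero, a, a_ne_zero, mul_eq_zero_of_uu_dvd p uu_dvd uu_dvd⟩, rfl⟩

end ZeroDivisorGraph

theorem stmt9_general (p : ℕ) [NeZero p] :
    (ZDG p).IsClique {a : Vtx p | ∃ x : ZMod p, x ≠ 0 ∧
        ((a : Rng p) = x • uu p ∨ (a : Rng p) = x • (uu p * vv p))} ∧
      {a : Vtx p | ∃ x : ZMod p, x ≠ 0 ∧
        ((a : Rng p) = x • uu p ∨ (a : Rng p) = x • (uu p * vv p))}.ncard = 2 * p - 2 ∧
      2 * p - 2 ≤ (ZDG p).cliqueNum := by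
  simp only [← nonzeroMultiples.mem_union_iff]
  set A := nonzeroMultiples (ZMod p) (uu p) ∪ nonzeroMultiples (ZMod p) (uu p * vv p)
  have isClique_A : (ZDG p).IsClique {a : Vtx p | (a : Rng p) ∈ A} :=
    (isClique_setOf_uu_dvd p).subset fun _ ↦ uu_dvd_of_mem_nonzeroMultiples_union p
  have ncard_A : {a : Vtx p | (a : Rng p) ∈ A}.ncard = 2 * p - 2 := calc
    {a : Vtx p | (a : Rng p) ∈ A}.ncard = A.ncard :=
      Set.ncard_preimage_of_injective_subset_range Subtype.val_injective
        (nonzeroMultiples_union_subset_range_val p)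
    _ = 2 * Nat.card (ZMod p) - 2 :=
      nonzeroMultiples.ncard_union (linearIndependent_uu_uu_mul_vv p)
    _ = 2 * p - 2 := by rw [Nat.card_zmod]
  exact ⟨isClique_A, ncard_A, ncard_A ▸ ncard_le_cliqueNum_of_isClique isClique_A⟩

theorem stmt9 (p : ℕ) [Fact p.Prime] (hodd : Odd p) :
    (ZDG p).IsClique {a : Vtx p | ∃ x : ZMod p, x ≠ 0 ∧
        ((a : Rng p) = x • uu p ∨ (a : Rng p) = x • (uu p * vv p))} ∧
      {a : Vtx p | ∃ x : ZMod p, x ≠ 0 ∧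
        ((a : Rng p) = x • uu p ∨ (a : Rng p) = x • (uu p * vv p))}.ncard = 2 * p - 2 ∧
      2 * p - 2 ≤ (ZDG p).cliqueNum := by
  exact stmt9_general p
end

section
/- The chromatic number of Γ(R) is at least 2p − 2. -/
/- `Rng p` models the ring `R = 𝔽_p[u,v]/⟨u², v², uv - vu⟩`:
every element is uniquely `a + b·u + c·v + d·uv` with `a b c d : ZMod p`. -/
set_option synthInstance.maxHeartbeats 1000000
set_option maxHeartbeats 1000000

theorem encard_le_chromaticNumber_of_isClique {V : Type*} {G : SimpleGraph V} {s : Set V}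
    (hs : G.IsClique s) : s.encard ≤ G.chromaticNumber := by
  let hom : (⊤ : SimpleGraph s) →g G :=
    ⟨Subtype.val, fun {x y} hxy => hs x.2 y.2 (Subtype.coe_ne_coe.mpr hxy)⟩
  calc s.encard = (⊤ : SimpleGraph s).chromaticNumber :=
        SimpleGraph.chromaticNumber_top_eq_enat_card.symm
    _ ≤ G.chromaticNumber := SimpleGraph.chromaticNumber_mono_of_hom hom

theorem encard_kerIdeal (R M : Type*) [CommSemiring R] [AddCommMonoid M] [Module R M]
    [Module Rᵐᵒᵖ M] [IsCentralScalar R M] :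
    (TrivSqZeroExt.kerIdeal R M : Set (TrivSqZeroExt R M)).encard = ENat.card M := by
  have range_inr : (TrivSqZeroExt.kerIdeal R M : Set (TrivSqZeroExt R M)) =
      Set.range TrivSqZeroExt.inr := by
    ext x
    rw [SetLike.mem_coe, TrivSqZeroExt.mem_kerIdeal_iff_inr]
    exact ⟨fun hx => ⟨x.snd, hx.symm⟩, by rintro ⟨m, rfl⟩; rfl⟩
  rw [range_inr, ← Set.image_univ, TrivSqZeroExt.inr_injective.encard_image, Set.encard_univ]

theorem natCard_dualNumber (R : Type*) : Nat.card (DualNumber R) = Nat.card R ^ 2 :=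
  (Nat.card_prod R R).trans (sq _).symm

theorem mul_eq_zero_of_mem_of_sq_eq_bot {R : Type*} [Semiring R] {I : Ideal R} (hI : I ^ 2 = ⊥)
    {x y : R} (hx : x ∈ I) (hy : y ∈ I) : x * y = 0 := by
  rw [← Ideal.mem_bot, ← hI, Submodule.pow_succ, Submodule.pow_one]
  exact Ideal.mul_mem_mul hx hy

theorem two_mul_sub_two_le_sq_sub_one (n : ℕ) : 2 * n - 2 ≤ n ^ 2 - 1 := by
  have := two_mul_le_add_sq n 1
  lia

section SquareZeroIdeal

variable {p : ℕ} {I : Ideal (Rng p)}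

theorem isClique_ZDG_of_sq_eq_bot (hI : I ^ 2 = ⊥) :
    (ZDG p).IsClique {x | (x : Rng p) ∈ I} :=
  fun _ hx _ hy hxy => ⟨hxy, mul_eq_zero_of_mem_of_sq_eq_bot hI hx hy⟩

theorem image_val_vertices_of_sq_eq_bot (hI : I ^ 2 = ⊥) :
    Subtype.val '' {x : Vtx p | (x : Rng p) ∈ I} = (I : Set (Rng p)) \ {0} := by
  ext x
  constructor
  · rintro ⟨y, hy, rfl⟩
    exact ⟨hy, y.2.1⟩
  · rintro ⟨hx, hx0⟩
    exact ⟨⟨x, hx0, x, hx0, mul_eq_zero_of_mem_of_sq_eq_bot hI hx hx⟩, hx, rfl⟩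

theorem encard_sub_one_le_chromaticNumber_ZDG (hI : I ^ 2 = ⊥) :
    (I : Set (Rng p)).encard - 1 ≤ (ZDG p).chromaticNumber := by
  rw [← Set.encard_sdiff_singleton_of_mem I.zero_mem, ← image_val_vertices_of_sq_eq_bot hI,
    Subtype.val_injective.encard_image]
  exact encard_le_chromaticNumber_of_isClique (isClique_ZDG_of_sq_eq_bot hI)

end SquareZeroIdeal

theorem stmt10_general (p : ℕ) [NeZero p] :
    ((p ^ 2 - 1 : ℕ) : ℕ∞) ≤ (ZDG p).chromaticNumber := by
  -- The kernel of `v ↦ 0`, that is, the ideal generated by `v`.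
  let I : Ideal (Rng p) := TrivSqZeroExt.kerIdeal (DualNumber (ZMod p)) (DualNumber (ZMod p))
  have : Finite (DualNumber (ZMod p)) := inferInstanceAs (Finite (ZMod p × ZMod p))
  have encard_I : (I : Set (Rng p)).encard = (p ^ 2 : ℕ) := by
    rw [encard_kerIdeal, ENat.card_eq_coe_natCard, natCard_dualNumber, Nat.card_zmod]
  simpa [encard_I] using
    encard_sub_one_le_chromaticNumber_ZDG (I := I) (TrivSqZeroExt.kerIdeal_sq _ _)

theorem stmt10 (p : ℕ) [Fact p.Prime] (hodd : Odd p) :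
    ((2 * p - 2 : ℕ) : ℕ∞) ≤ (ZDG p).chromaticNumber := by
  exact (Nat.cast_le.mpr (two_mul_sub_two_le_sq_sub_one p)).trans (stmt10_general p)
end

section
/- −1 is an eigenvalue of the adjacency matrix of Γ(R) (over ℝ) with multiplicity at least p − 2; indeed the vectors e_{uv} − e_{x·uv} for x ∈ 𝔽_p* \ {1} are linearly independent eigenvectors for the eigenvalue −1. -/
/- `Rng p` models the ring `R = 𝔽_p[u,v]/⟨u², v², uv - vu⟩`:
every element is uniquely `a + b·u + c·v + d·uv` with `a b c d : ZMod p`. -/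
set_option synthInstance.maxHeartbeats 1000000
set_option maxHeartbeats 1000000

/-- The adjacency matrix of `Γ(R)` over `ℝ`. -/
def adjMat (p : ℕ) : Matrix (Vtx p) (Vtx p) ℝ :=
  fun a b => if (ZDG p).Adj a b then 1 else 0

/-- The vector `e_{uv} - e_{x·uv}` indexed by the vertices of `Γ(R)`. -/
def evec (p : ℕ) (x : ZMod p) : Vtx p → ℝ := fun a =>
  (if (a : Rng p) = uu p * vv p then 1 else 0) -
  (if (a : Rng p) = x • (uu p * vv p) then 1 else 0)

/-!
A zero divisor of `R` has zero constant term, because otherwise it would be a unit; hence it is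
annihilated by every multiple of `uv`. So each `x·uv` with `x ≠ 0` is adjacent to all other
vertices, and any two vertices with the same closed neighbourhood give rise to an eigenvector
`e_a - e_b` of the adjacency matrix for the eigenvalue `-1`.
-/

section LinearAlgebra

theorem linearIndependent_sub_of_ne {ι R M : Type*} [Ring R] [AddCommGroup M] [Module R M]
    {v : ι → M} (hv : LinearIndependent R v) (i₀ : ι) :
    LinearIndependent R fun i : {i // i ≠ i₀} => v i₀ - v i := by
  have h := (affineIndependent_iff_linearIndependent_vsub R v i₀).mp hv.affineIndependent
  simpa only [vsub_eq_sub, Pi.neg_def, neg_sub] using h.neg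

theorem card_le_finrank_eigenspace {ι K V : Type*} [Fintype ι] [Field K] [AddCommGroup V]
    [Module K V] [FiniteDimensional K V] {f : Module.End K V} {μ : K} {v : ι → V}
    (hv : LinearIndependent K v) (hf : ∀ i, f (v i) = μ • v i) :
    Fintype.card ι ≤ Module.finrank K (f.eigenspace μ) := by
  rw [← finrank_span_eq_card hv]
  refine Submodule.finrank_mono (Submodule.span_le.mpr ?_)
  rintro _ ⟨i, rfl⟩
  exact Module.End.mem_eigenspace_iff.mpr (hf i)

end LinearAlgebra

section Graph

open Matrix

variable {V : Type*} [Fintype V] [DecidableEq V] {G : SimpleGraph V} [DecidableRel G.Adj] {v w : V}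

theorem adjMatrix_mulVec_single_add_single (α : Type*) [NonAssocSemiring α] (v : V) :
    G.adjMatrix α *ᵥ Pi.single v 1 + Pi.single v 1 =
      (insert v (G.neighborSet v)).indicator 1 := by
  ext z
  rw [mulVec_single_one, Pi.add_apply, col_apply]
  by_cases hzv : z = v
  · simp [hzv]
  · simp [hzv, Set.indicator_apply, G.adj_comm]

theorem adjMatrix_mulVec_single_sub_single_of_insert_neighborSet_eq (α : Type*)
    [NonAssocRing α] (h : insert v (G.neighborSet v) = insert w (G.neighborSet w)) :
    G.adjMatrix α *ᵥ (Pi.single v 1 - Pi.single w 1) =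
      -(Pi.single v 1 - Pi.single w 1 : V → α) := by
  rw [mulVec_sub, neg_sub, sub_eq_sub_iff_add_eq_add, add_comm (Pi.single w 1),
    adjMatrix_mulVec_single_add_single, adjMatrix_mulVec_single_add_single, h]

end Graph

theorem card_subtype_ne_and_ne {α : Type*} [Fintype α] [DecidableEq α] {a b : α} (hab : a ≠ b) :
    Fintype.card {x // x ≠ a ∧ x ≠ b} = Fintype.card α - 2 := by
  have h : ({x | x ≠ a ∧ x ≠ b} : Finset α) = {a, b}ᶜ := by
    ext x
    simp
  rw [Fintype.card_subtype, h, Finset.card_compl, Finset.card_pair hab]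

section DualNumber

open TrivSqZeroExt
open scoped DualNumber

theorem mul_inr_inr_eq_zero {R : Type*} [CommSemiring R] {a : R[ε][ε]} (ha : a.fst.fst = 0)
    (c : R) : a * inr (inr c) = 0 := by
  ext <;> simp [ha]

theorem fst_fst_eq_zero_of_mul_eq_zero {K : Type*} [Field K] {a b : K[ε][ε]} (hb : b ≠ 0)
    (hab : a * b = 0) : a.fst.fst = 0 := by
  by_contra ha
  have a_unit : IsUnit a := by
    rwa [isUnit_iff_isUnit_fst, isUnit_iff_isUnit_fst, isUnit_iff_ne_zero]
  exact hb (a_unit.mul_right_eq_zero.mp hab)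

theorem smul_uu_mul_vv (p : ℕ) (c : ZMod p) : c • (uu p * vv p) = inr (inr c) := by
  ext <;> simp [uu, vv]

theorem smul_uu_mul_vv_injective (p : ℕ) :
    Function.Injective fun c : ZMod p => c • (uu p * vv p) := by
  simp only [smul_uu_mul_vv]
  exact inr_injective.comp inr_injective

theorem smul_uu_mul_vv_ne_zero {p : ℕ} {c : ZMod p} (hc : c ≠ 0) : c • (uu p * vv p) ≠ 0 :=
  fun h => hc (smul_uu_mul_vv_injective p (h.trans (zero_smul _ _).symm))

theorem fst_fst_smul_uu_mul_vv (p : ℕ) (c : ZMod p) : (c • (uu p * vv p)).fst.fst = 0 := by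
  rw [smul_uu_mul_vv, fst_inr, fst_zero]

theorem mul_smul_uu_mul_vv_eq_zero {p : ℕ} {a : Rng p} (ha : a.fst.fst = 0) (c : ZMod p) :
    a * (c • (uu p * vv p)) = 0 := by
  rw [smul_uu_mul_vv, mul_inr_inr_eq_zero ha]

end DualNumber

theorem adjMat_eq_adjMatrix (p : ℕ) : adjMat p = (ZDG p).adjMatrix ℝ := rfl

section Vertex

variable (p : ℕ)

/-- The vertex `c·uv` of `Γ(R)`. The scalar is taken to be a unit so that it is nonzero and the
base point `uv` is the vertex at `1`. -/
def uvVertex [Nontrivial (ZMod p)] (c : (ZMod p)ˣ) : Vtx p :=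
  ⟨(c : ZMod p) • (uu p * vv p), smul_uu_mul_vv_ne_zero c.ne_zero,
    (c : ZMod p) • (uu p * vv p), smul_uu_mul_vv_ne_zero c.ne_zero,
    mul_smul_uu_mul_vv_eq_zero (fst_fst_smul_uu_mul_vv p c) c⟩

theorem uvVertex_injective [Nontrivial (ZMod p)] : Function.Injective (uvVertex p) :=
  fun _ _ h => Units.ext (smul_uu_mul_vv_injective p (congrArg Subtype.val h))

theorem evec_units [Nontrivial (ZMod p)] (c : (ZMod p)ˣ) :
    evec p c = Pi.single (uvVertex p 1) 1 - Pi.single (uvVertex p c) 1 := by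
  ext a
  simp only [evec, Pi.sub_apply, Pi.single_apply, Subtype.ext_iff, uvVertex, Units.val_one,
    one_smul]

theorem linearIndependent_evec_units [Nontrivial (ZMod p)] :
    LinearIndependent ℝ fun c : {c : (ZMod p)ˣ // c ≠ 1} => evec p c.val := by
  simp only [evec_units]
  exact linearIndependent_sub_of_ne
    ((Pi.linearIndependent_single_one (Vtx p) ℝ).comp _ (uvVertex_injective p)) 1

variable [Fact p.Prime]

theorem isUniversal_uvVertex (c : (ZMod p)ˣ) : (ZDG p).IsUniversal (uvVertex p c) := by
  rintro ⟨a, _, b, hb, hab⟩ hne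
  have a_mul_uv : a * ((c : ZMod p) • (uu p * vv p)) = 0 :=
    mul_smul_uu_mul_vv_eq_zero (fst_fst_eq_zero_of_mul_eq_zero hb hab) c
  exact ⟨hne, (mul_comm (_ : Rng p) _).trans a_mul_uv⟩

theorem adjMat_mulVec_evec {x : ZMod p} (hx : x ≠ 0) :
    (adjMat p).mulVec (evec p x) = (-1 : ℝ) • evec p x := by
  lift x to (ZMod p)ˣ using hx.isUnit
  rw [evec_units, adjMat_eq_adjMatrix, neg_one_smul]
  refine adjMatrix_mulVec_single_sub_single_of_insert_neighborSet_eq ℝ ?_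
  rw [SimpleGraph.insert_neighborSet_eq_univ.mpr (isUniversal_uvVertex p 1),
    SimpleGraph.insert_neighborSet_eq_univ.mpr (isUniversal_uvVertex p x)]

theorem linearIndependent_evec :
    LinearIndependent ℝ fun x : {x : ZMod p // x ≠ 0 ∧ x ≠ 1} => evec p x := by
  let toUnit (x : {x : ZMod p // x ≠ 0 ∧ x ≠ 1}) : {c : (ZMod p)ˣ // c ≠ 1} :=
    ⟨Units.mk0 x x.2.1, fun h => x.2.2 (congrArg Units.val h)⟩
  have toUnit_injective : Function.Injective toUnit := fun x y h =>
    Subtype.ext (congrArg (fun c => (c.1 : ZMod p)) h)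
  exact (linearIndependent_evec_units p).comp toUnit toUnit_injective

end Vertex

theorem stmt12 (p : ℕ) [Fact p.Prime] (hodd : Odd p) :
    (∀ x : ZMod p, x ≠ 0 → x ≠ 1 →
        (adjMat p).mulVec (evec p x) = (-1 : ℝ) • evec p x) ∧
      LinearIndependent ℝ (fun x : {x : ZMod p // x ≠ 0 ∧ x ≠ 1} => evec p x.val) ∧
      p - 2 ≤ Module.finrank ℝ
        (Module.End.eigenspace (Matrix.toLin' (adjMat p)) (-1 : ℝ)) := by
  refine ⟨fun x hx _ => adjMat_mulVec_evec p hx, linearIndependent_evec p, ?_⟩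
  calc p - 2 = Fintype.card {x : ZMod p // x ≠ 0 ∧ x ≠ 1} := by
        rw [card_subtype_ne_and_ne zero_ne_one, ZMod.card]
    _ ≤ _ := card_le_finrank_eigenspace (linearIndependent_evec p) fun x =>
        (Matrix.toLin'_apply _ _).trans (adjMat_mulVec_evec p x.2.1)
end
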